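/- In the group ring R[P], the product α·β equals 1. -/

import Mathlib

open MvPolynomial

noncomputable section

/-- The two relators of the Promislow group `P = ⟨a, b | b⁻¹a²b = a⁻², a⁻¹b²a = b⁻²⟩`,
written as words that equal the identity: `b⁻¹a²ba²` and `a⁻¹b²ab²`. -/
def Prels : Set (FreeGroup (Fin 2)) :=
  {(FreeGroup.of 1)⁻¹ * (FreeGroup.of 0) ^ 2 * (FreeGroup.of 1) * (FreeGroup.of 0) ^ 2,
   (FreeGroup.of 0)⁻¹ * (FreeGroup.of 1) ^ 2 * (FreeGroup.of 0) * (FreeGroup.of 1) ^ 2}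

/-- The Promislow group. -/
abbrev P : Type := PresentedGroup Prels

def pa : P := PresentedGroup.of 0
def pb : P := PresentedGroup.of 1
def px : P := pa ^ 2
def py : P := pb ^ 2
def pz : P := (pa * pb) ^ 2

/-- The ring `R = ℤ[s,t]/⟨s⁴+1, t⁴+1⟩`. -/
abbrev Rr : Type :=
  MvPolynomial (Fin 2) ℤ ⧸
    Ideal.span {(X 0 : MvPolynomial (Fin 2) ℤ) ^ 4 + 1, (X 1 : MvPolynomial (Fin 2) ℤ) ^ 4 + 1}

def s : Rr := Ideal.Quotient.mk _ (X 0)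
def t : Rr := Ideal.Quotient.mk _ (X 1)

/-- The image of a group element in the group ring `R[P]`. -/
def G (g : P) : MonoidAlgebra Rr P := MonoidAlgebra.of Rr P g

def α1 : MonoidAlgebra Rr P :=
  1 + t ^ 2 • G (px * pz⁻¹) - t ^ 2 • G (px⁻¹ * pz⁻¹) - s ^ 2 • G (py * pz⁻¹)
    + s ^ 2 • G (py⁻¹ * pz⁻¹)

def αa : MonoidAlgebra Rr P :=
  -(s ^ 2 • G px⁻¹) + 1 - G (px⁻¹ * py⁻¹ * pz) + s ^ 2 • G (py * pz)

def αb : MonoidAlgebra Rr P :=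
  G (px⁻¹ * py⁻¹ * pz) - t ^ 2 • G (px * pz) + t ^ 2 • G (py⁻¹ * pz ^ 2) - G (pz ^ 2)

def αab : MonoidAlgebra Rr P :=
  -(t ^ 2 • G (px⁻¹ * pz⁻¹)) - s ^ 2 • G (py * pz⁻¹) + (s ^ 2 * t ^ 2) • G pz⁻¹
    + G (px⁻¹ * py * pz⁻¹) + s ^ 2 • G (px⁻¹ * pz⁻¹ ^ 2) + t ^ 2 • G (py * pz⁻¹ ^ 2)
    - G (pz⁻¹ ^ 2) - (s ^ 2 * t ^ 2) • G (px⁻¹ * py * pz⁻¹ ^ 2)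

/-- The unit `α ∈ R[P]`. -/
def αU : MonoidAlgebra Rr P :=
  α1 + s • (αa * G pa) + t • (αb * G pb) + (s * t) • (αab * G (pa * pb))

def β1 : MonoidAlgebra Rr P :=
  1 + t ^ 2 • G (px⁻¹ * pz) - t ^ 2 • G (px * pz) + s ^ 2 • G (py * pz) - s ^ 2 • G (py⁻¹ * pz)

def βa : MonoidAlgebra Rr P :=
  -1 + s ^ 2 • G px⁻¹ - s ^ 2 • G (py * pz) + G (px⁻¹ * py⁻¹ * pz)

def βb : MonoidAlgebra Rr P :=
  -G (px⁻¹ * py⁻¹ * pz) + t ^ 2 • G (px * pz) - t ^ 2 • G (py⁻¹ * pz ^ 2) + G (pz ^ 2)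

def βab : MonoidAlgebra Rr P :=
  (s ^ 2 * t ^ 2) • G (px⁻¹ * py) + 1 - t ^ 2 • G py - s ^ 2 • G px⁻¹
    - G (px⁻¹ * py * pz) - (s ^ 2 * t ^ 2) • G pz + s ^ 2 • G (py * pz) + t ^ 2 • G (px⁻¹ * pz)

/-- The inverse unit `β ∈ R[P]`. -/
def βU : MonoidAlgebra Rr P :=
  β1 + s • (βa * G pa) + t • (βb * G pb) + (s * t) • (βab * G (pa * pb))

/-! The proof is by reflection: elements of `R[P]` are represented by lists of terms
`c s^m t^n x^i y^j z^k a^p b^q`, multiplied by an explicit normal form rule. -/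

namespace Promislow

theorem rel1 : pb⁻¹ * pa ^ 2 * pb * pa ^ 2 = 1 :=
  PresentedGroup.one_of_mem (rels := Prels) (Set.mem_insert _ _)

theorem rel2 : pa⁻¹ * pb ^ 2 * pa * pb ^ 2 = 1 :=
  PresentedGroup.one_of_mem (rels := Prels) (Set.mem_insert_of_mem _ rfl)

theorem xb : SemiconjBy pb px px⁻¹ := by
  have h : pb⁻¹ * px * pb * px = 1 := rel1
  have h2 : px * pb * px = pb := by
    have := congrArg (fun g => pb * g) h
    simpa [mul_assoc] using this
  change pb * px = px⁻¹ * pb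
  rw [eq_inv_mul_iff_mul_eq, ← mul_assoc, h2]

theorem ya : SemiconjBy pa py py⁻¹ := by
  have h : pa⁻¹ * py * pa * py = 1 := rel2
  have h2 : py * pa * py = pa := by
    have := congrArg (fun g => pa * g) h
    simpa [mul_assoc] using this
  change pa * py = py⁻¹ * pa
  rw [eq_inv_mul_iff_mul_eq, ← mul_assoc, h2]

theorem xa : SemiconjBy pa px px := Commute.self_pow pa 2
theorem yb : SemiconjBy pb py py := Commute.self_pow pb 2

theorem aa : pa * pa = px := (pow_two pa).symm
theorem bb : pb * pb = py := (pow_two pb).symm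

theorem cxy : Commute px py := by
  have h := ya.inv_right.mul_left ya
  rw [aa, inv_inv] at h
  exact h

theorem za : SemiconjBy pa pz pz⁻¹ := by
  change pa * pz = pz⁻¹ * pa
  rw [eq_inv_mul_iff_mul_eq]
  have e1 : pb * py⁻¹ = py⁻¹ * pb := yb.inv_right
  have e2 : pb * px = px⁻¹ * pb := xb
  have e3 : pa * py = py⁻¹ * pa := ya
  have e4 : py⁻¹ * px = px * py⁻¹ := cxy.symm.inv_left
  calc pz * (pa * pz) = (pa * pb) * pa * pb * (pa * pa) * pb * pa * pb := by
        simp only [pz, pow_two, mul_assoc]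
    _ = pa * pb * pa * (pb * px) * pb * pa * pb := by rw [aa]; simp only [mul_assoc]
    _ = pa * pb * pa * px⁻¹ * (pb * pb) * pa * pb := by rw [e2]; simp only [mul_assoc]
    _ = pa * pb * (pa * px⁻¹) * (py * pa) * pb := by rw [bb]; simp only [mul_assoc]
    _ = pa * pb * (px⁻¹ * pa) * (pa * py⁻¹) * pb := by
        rw [show pa * px⁻¹ = px⁻¹ * pa from xa.inv_right,
          show pa * py⁻¹ = py * pa from by simpa using ya.inv_right.eq]
    _ = pa * pb * px⁻¹ * (pa * pa) * (py⁻¹ * pb) := by simp only [mul_assoc]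
    _ = pa * pb * (pb * py⁻¹) := by rw [aa, ← e1]; group
    _ = pa * (pb * pb) * py⁻¹ := by simp only [mul_assoc]
    _ = pa := by rw [bb]; group

theorem zb : SemiconjBy pb pz pz⁻¹ := by
  -- conjugation by `a b` fixes `z`
  have h : SemiconjBy (pa * pb) pz pz := Commute.self_pow (pa * pb) 2
  have h2 : SemiconjBy pa⁻¹ pz pz⁻¹ := by
    have := za.inv_right
    rw [inv_inv] at this
    exact SemiconjBy.inv_symm_left this
  have h3 := h2.mul_left h
  simpa using h3

theorem cxz : Commute px pz := by
  have h := za.inv_right.mul_left za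
  rw [aa, inv_inv] at h
  exact h

theorem cyz : Commute py pz := by
  have h := zb.inv_right.mul_left zb
  rw [bb, inv_inv] at h
  exact h

/-- The translation `x^i y^j z^k`. -/
def N (i j k : ℤ) : P := px ^ i * py ^ j * pz ^ k

theorem N_mul (i j k i' j' k' : ℤ) : N i j k * N i' j' k' = N (i + i') (j + j') (k + k') := by
  have h1 : pz ^ k * px ^ i' = px ^ i' * pz ^ k := (cxz.symm.zpow_zpow k i').eq
  have h2 : py ^ j * px ^ i' = px ^ i' * py ^ j := (cxy.symm.zpow_zpow j i').eq
  have h3 : pz ^ k * py ^ j' = py ^ j' * pz ^ k := (cyz.symm.zpow_zpow k j').eq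
  simp only [N, zpow_add]
  calc _ = px ^ i * py ^ j * (pz ^ k * px ^ i') * py ^ j' * pz ^ k' := by simp only [mul_assoc]
    _ = px ^ i * (py ^ j * px ^ i') * (pz ^ k * py ^ j') * pz ^ k' := by
        rw [h1]; simp only [mul_assoc]
    _ = _ := by rw [h2, h3]; simp only [mul_assoc]

theorem aN (i j k : ℤ) : pa * N i j k = N i (-j) (-k) * pa := by
  have h := ((xa.zpow_right i).mul_right (ya.zpow_right j)).mul_right (za.zpow_right k)
  simpa [N] using h.eq

theorem bN (i j k : ℤ) : pb * N i j k = N (-i) j (-k) * pb := by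
  have h := ((xb.zpow_right i).mul_right (yb.zpow_right j)).mul_right (zb.zpow_right k)
  simpa [N] using h.eq

/-- Coset representatives `1, a, b, ab`. -/
def C (p q : Bool) : P := (bif p then pa else 1) * (bif q then pb else 1)

/-- Apply a sign. -/
def sg (e : Bool) (i : ℤ) : ℤ := bif e then -i else i

theorem C_N (p q : Bool) (i j k : ℤ) :
    C p q * N i j k = N (sg q i) (sg p j) (sg (xor p q) k) * C p q := by
  cases p <;> cases q <;> simp [C, sg, aN, bN, mul_assoc]
  rw [← mul_assoc, aN, mul_assoc]; simp

/-- The cocycle. -/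
def kap : Bool → Bool → Bool → Bool → ℤ × ℤ × ℤ
  | true, false, true, _ => (1, 0, 0)
  | false, true, true, false => (-1, 1, -1)
  | false, true, false, true => (0, 1, 0)
  | false, true, true, true => (-1, 0, -1)
  | true, true, true, false => (0, -1, 1)
  | true, true, false, true => (0, -1, 0)
  | true, true, true, true => (0, 0, 1)
  | _, _, _, _ => (0, 0, 0)

theorem N0 : N 0 0 0 = 1 := by simp [N]

theorem hab_b : pa * pb * pb = py⁻¹ * pa := by rw [mul_assoc, bb]; exact ya

theorem hab_a : pa * pb * pa = py⁻¹ * pz * pb := by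
  have h : py⁻¹ * pz = pz * py⁻¹ := (cyz.inv_left).eq
  rw [h, ← bb]; simp [pz, pow_two, mul_assoc]

theorem hba : pb * pa = px⁻¹ * py * pz⁻¹ * (pa * pb) := by
  have h : pa * (pb * pa) = pa * (px⁻¹ * py * pz⁻¹ * (pa * pb)) := by
    have e := aN (-1) 1 (-1)
    simp only [N, zpow_neg, zpow_one, neg_neg] at e
    rw [← mul_assoc, hab_a, ← mul_assoc pa, e, mul_assoc _ pa, ← mul_assoc pa pa, aa]
    have c1 : pz * px = px * pz := cxz.symm.eq
    have c2 : py⁻¹ * px = px * py⁻¹ := cxy.symm.inv_left.eq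
    calc py⁻¹ * pz * pb = px⁻¹ * (px * py⁻¹) * pz * pb := by group
      _ = px⁻¹ * py⁻¹ * (px * pz) * pb := by rw [← c2]; simp only [mul_assoc]
      _ = _ := by rw [← c1]; simp only [mul_assoc]
  exact mul_left_cancel h

theorem hb_ab : pb * (pa * pb) = px⁻¹ * pz⁻¹ * pa := by
  have c : py * pz⁻¹ = pz⁻¹ * py := cyz.inv_right.eq
  rw [← mul_assoc, hba, mul_assoc _ (pa * pb), hab_b, mul_assoc px⁻¹, c]
  group

theorem C_C (p q p' q' : Bool) : C p q * C p' q' =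
    N (kap p q p' q').1 (kap p q p' q').2.1 (kap p q p' q').2.2 * C (xor p p') (xor q q') := by
  cases p <;> cases q <;> cases p' <;> cases q' <;>
    simp [C, kap, N0] <;> simp [N]
  · exact bb
  · exact hba
  · exact hb_ab
  · exact aa
  · rw [← mul_assoc, aa]
  · exact hab_b
  · exact hab_a
  · simp [pz, pow_two]

/-- A term `c s^m t^n x^i y^j z^k a^p b^q`. -/
structure Tm where
  c : ℤ
  m : ℕ
  n : ℕ
  i : ℤ
  j : ℤ
  k : ℤ
  p : Bool
  q : Bool
deriving DecidableEq

/-- Value of a term. -/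
def ev (w : Tm) : MonoidAlgebra Rr P :=
  MonoidAlgebra.single (N w.i w.j w.k * C w.p w.q) ((w.c : Rr) * s ^ w.m * t ^ w.n)

/-- Product of terms. -/
def mulT (v w : Tm) : Tm :=
  { c := v.c * w.c, m := v.m + w.m, n := v.n + w.n
    i := v.i + sg v.q w.i + (kap v.p v.q w.p w.q).1
    j := v.j + sg v.p w.j + (kap v.p v.q w.p w.q).2.1
    k := v.k + sg (xor v.p v.q) w.k + (kap v.p v.q w.p w.q).2.2
    p := xor v.p w.p, q := xor v.q w.q }

theorem ev_mulT (v w : Tm) : ev (mulT v w) = ev v * ev w := by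
  simp only [ev, mulT, MonoidAlgebra.single_mul_single]
  congr 1
  · symm
    calc _ = N v.i v.j v.k * (C v.p v.q * N w.i w.j w.k) * C w.p w.q := by
          simp only [mul_assoc]
      _ = N v.i v.j v.k * N (sg v.q w.i) (sg v.p w.j) (sg (xor v.p v.q) w.k) *
          (C v.p v.q * C w.p w.q) := by rw [C_N]; simp only [mul_assoc]
      _ = _ := by rw [C_C, ← mul_assoc, N_mul, N_mul]
  · push_cast; ring

/-- Value of a list of terms. -/
def evL (l : List Tm) : MonoidAlgebra Rr P := (l.map ev).sum

theorem evL_nil : evL [] = 0 := rfl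
theorem evL_cons (w : Tm) (l : List Tm) : evL (w :: l) = ev w + evL l := by simp [evL]
theorem evL_append (l l' : List Tm) : evL (l ++ l') = evL l + evL l' := by simp [evL]

/-- Product of lists. -/
def mulL : List Tm → List Tm → List Tm
  | [], _ => []
  | v :: l, l' => l'.map (mulT v) ++ mulL l l'

theorem evL_map (v : Tm) (l : List Tm) : evL (l.map (mulT v)) = ev v * evL l := by
  induction l with
  | nil => simp [evL_nil]
  | cons w l ih => rw [List.map_cons, evL_cons, evL_cons, ih, ev_mulT, mul_add]

theorem evL_mulL (l l' : List Tm) : evL (mulL l l') = evL l * evL l' := by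
  induction l with
  | nil => simp [mulL, evL_nil]
  | cons v l ih => rw [mulL, evL_append, evL_map, ih, evL_cons, add_mul]

theorem s4 : s ^ 4 = -1 := by
  rw [eq_neg_iff_add_eq_zero]
  change Ideal.Quotient.mk _ (X 0 ^ 4 + 1) = 0
  exact Ideal.Quotient.eq_zero_iff_mem.2 (Ideal.subset_span (Set.mem_insert _ _))

theorem t4 : t ^ 4 = -1 := by
  rw [eq_neg_iff_add_eq_zero]
  change Ideal.Quotient.mk _ (X 1 ^ 4 + 1) = 0
  exact Ideal.Quotient.eq_zero_iff_mem.2 (Ideal.subset_span (Set.mem_insert_of_mem _ rfl))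

/-- Reduce the exponent of `s`. -/
def redS (w : Tm) : Tm := if 4 ≤ w.m then { w with c := -w.c, m := w.m - 4 } else w
/-- Reduce the exponent of `t`. -/
def redT (w : Tm) : Tm := if 4 ≤ w.n then { w with c := -w.c, n := w.n - 4 } else w

theorem ev_redS (w : Tm) : ev (redS w) = ev w := by
  unfold redS
  split_ifs with h
  · obtain ⟨d, hd⟩ := Nat.exists_eq_add_of_le h
    simp only [ev, hd, Nat.add_sub_cancel_left, pow_add, s4]
    congr 1; push_cast; ring
  · rfl

theorem ev_redT (w : Tm) : ev (redT w) = ev w := by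
  unfold redT
  split_ifs with h
  · obtain ⟨d, hd⟩ := Nat.exists_eq_add_of_le h
    simp only [ev, hd, Nat.add_sub_cancel_left, pow_add, t4]
    congr 1; push_cast; ring
  · rfl

/-- Insert a term, collecting coefficients. -/
def ins (w : Tm) : List Tm → List Tm
  | [] => [w]
  | v :: l =>
    if { w with c := v.c } = v then
      (if v.c + w.c = 0 then l else { v with c := v.c + w.c } :: l)
    else v :: ins w l

theorem evL_ins (w : Tm) (l : List Tm) : evL (ins w l) = ev w + evL l := by
  induction l with
  | nil => rw [ins, evL_cons]
  | cons v l ih =>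
    have key : { w with c := v.c } = v → ev w + ev v = ev { v with c := v.c + w.c } := by
      intro h
      rw [← h]
      simp only [ev]
      rw [← MonoidAlgebra.single_add]
      congr 1; push_cast; ring
    rw [ins]
    split_ifs with h h0
    · have hk := key h
      rw [h0] at hk
      rw [evL_cons, ← add_assoc, hk]
      simp [ev]
    · rw [evL_cons, evL_cons, ← add_assoc, key h]
    · rw [evL_cons, evL_cons, ih]; abel

/-- Normal form. -/
def norm : List Tm → List Tm
  | [] => []
  | w :: l => ins (redS (redT w)) (norm l)

theorem evL_norm (l : List Tm) : evL (norm l) = evL l := by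
  induction l with
  | nil => rfl
  | cons w l ih => rw [norm, evL_ins, ih, ev_redS, ev_redT, evL_cons]

/-- Terms of `α`. -/
def la : List Tm :=
  [⟨1, 0, 0, 0, 0, 0, false, false⟩, ⟨1, 0, 2, 1, 0, -1, false, false⟩,
   ⟨-1, 0, 2, -1, 0, -1, false, false⟩, ⟨-1, 2, 0, 0, 1, -1, false, false⟩,
   ⟨1, 2, 0, 0, -1, -1, false, false⟩,
   ⟨-1, 3, 0, -1, 0, 0, true, false⟩, ⟨1, 1, 0, 0, 0, 0, true, false⟩,
   ⟨-1, 1, 0, -1, -1, 1, true, false⟩, ⟨1, 3, 0, 0, 1, 1, true, false⟩,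
   ⟨1, 0, 1, -1, -1, 1, false, true⟩, ⟨-1, 0, 3, 1, 0, 1, false, true⟩,
   ⟨1, 0, 3, 0, -1, 2, false, true⟩, ⟨-1, 0, 1, 0, 0, 2, false, true⟩,
   ⟨-1, 1, 3, -1, 0, -1, true, true⟩, ⟨-1, 3, 1, 0, 1, -1, true, true⟩,
   ⟨1, 3, 3, 0, 0, -1, true, true⟩, ⟨1, 1, 1, -1, 1, -1, true, true⟩,
   ⟨1, 3, 1, -1, 0, -2, true, true⟩, ⟨1, 1, 3, 0, 1, -2, true, true⟩,
   ⟨-1, 1, 1, 0, 0, -2, true, true⟩, ⟨-1, 3, 3, -1, 1, -2, true, true⟩]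

/-- Terms of `β`. -/
def lb : List Tm :=
  [⟨1, 0, 0, 0, 0, 0, false, false⟩, ⟨1, 0, 2, -1, 0, 1, false, false⟩,
   ⟨-1, 0, 2, 1, 0, 1, false, false⟩, ⟨1, 2, 0, 0, 1, 1, false, false⟩,
   ⟨-1, 2, 0, 0, -1, 1, false, false⟩,
   ⟨-1, 1, 0, 0, 0, 0, true, false⟩, ⟨1, 3, 0, -1, 0, 0, true, false⟩,
   ⟨-1, 3, 0, 0, 1, 1, true, false⟩, ⟨1, 1, 0, -1, -1, 1, true, false⟩,
   ⟨-1, 0, 1, -1, -1, 1, false, true⟩, ⟨1, 0, 3, 1, 0, 1, false, true⟩,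
   ⟨-1, 0, 3, 0, -1, 2, false, true⟩, ⟨1, 0, 1, 0, 0, 2, false, true⟩,
   ⟨1, 3, 3, -1, 1, 0, true, true⟩, ⟨1, 1, 1, 0, 0, 0, true, true⟩,
   ⟨-1, 1, 3, 0, 1, 0, true, true⟩, ⟨-1, 3, 1, -1, 0, 0, true, true⟩,
   ⟨-1, 1, 1, -1, 1, 1, true, true⟩, ⟨-1, 3, 3, 0, 0, 1, true, true⟩,
   ⟨1, 3, 1, 0, 1, 1, true, true⟩, ⟨1, 1, 3, -1, 0, 1, true, true⟩]

theorem ev_eq (c : ℤ) (m n : ℕ) (i j k : ℤ) (p q : Bool) :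
    ev ⟨c, m, n, i, j, k, p, q⟩ =
      (c : MonoidAlgebra Rr P) * ((s ^ m * t ^ n) • (G (N i j k) * G (C p q))) := by
  simp only [ev, G, MonoidAlgebra.of_apply, MonoidAlgebra.single_mul_single]
  rw [MonoidAlgebra.smul_single, ← zsmul_eq_mul (MonoidAlgebra.single _ _) c,
    MonoidAlgebra.smul_single]
  congr 1
  simp [mul_assoc]

theorem ss (r r' : Rr) (u : MonoidAlgebra Rr P) : r • r' • u = (r * r') • u := smul_smul r r' u

theorem G_one : G 1 = 1 := map_one _

theorem C_ff : C false false = 1 := by simp [C]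
theorem C_tf : C true false = pa := by simp [C]
theorem C_ft : C false true = pb := by simp [C]
theorem C_tt : C true true = pa * pb := by simp [C]

theorem zp2 (g : P) : g ^ (2 : ℤ) = g ^ 2 := zpow_ofNat g 2
theorem zpm2 (g : P) : g ^ (-2 : ℤ) = g⁻¹ ^ 2 := by rw [zpow_neg, zp2, inv_pow]

theorem evL_la : evL la = αU := by
  simp only [la, evL_cons, evL_nil, ev_eq, C_ff, C_tf, C_ft, C_tt, N, zp2, zpm2, zpow_zero,
    zpow_one, zpow_neg_one, one_mul, mul_one, G_one, Int.cast_one, Int.cast_neg, neg_mul,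
    pow_zero, pow_one, one_smul, add_zero]
  simp only [αU, α1, αa, αb, αab, add_mul, sub_mul, neg_mul, one_mul, smul_mul_assoc, smul_add,
    smul_sub, smul_neg, ss]
  ring_nf
  abel

theorem evL_lb : evL lb = βU := by
  simp only [lb, evL_cons, evL_nil, ev_eq, C_ff, C_tf, C_ft, C_tt, N, zp2, zpm2, zpow_zero,
    zpow_one, zpow_neg_one, one_mul, mul_one, G_one, Int.cast_one, Int.cast_neg, neg_mul,
    pow_zero, pow_one, one_smul, add_zero]
  simp only [βU, β1, βa, βb, βab, add_mul, sub_mul, neg_mul, one_mul, smul_mul_assoc, smul_add,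
    smul_sub, smul_neg, ss]
  ring_nf
  abel

theorem comp : norm (mulL la lb) = [⟨1, 0, 0, 0, 0, 0, false, false⟩] := by
  decide +kernel

end Promislow

/-- In the group ring `R[P]`, the product `α·β` equals `1`. -/
theorem alpha_mul_beta : αU * βU = 1 := by
  rw [← Promislow.evL_la, ← Promislow.evL_lb, ← Promislow.evL_mulL, ← Promislow.evL_norm,
    Promislow.comp, Promislow.evL_cons, Promislow.evL_nil, Promislow.ev_eq]
  simp [Promislow.N0, Promislow.C_ff, Promislow.G_one]
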